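/- Let (S_r) be a strong Solovay test and let μ be a Borel probability measure on 2^ℕ such that for some rational δ > 0 one has μ(S_r) ≥ δ for infinitely many r. Then there is a computable function f : ℕ → ℕ with Σ_n 2^{−f(n)} < ∞ and a constant c such that C(μ↾n ∣ n) ≤ n − δ·f(n) + c for infinitely many n. -/

import Mathlib

open MeasureTheory Filter

/-- Cantor space: the space of infinite binary sequences. -/
abbrev Cantor : Type := ℕ → Bool

/-- Finite binary strings. -/
abbrev BStr : Type := List Bool

/-- The cylinder set of sequences extending the string `x`. -/
def cyl (x : BStr) : Set Cantor := {Z | ∀ i : Fin x.length, Z i.1 = x.get i}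

/-- The string of the first `n` bits of `Z`. -/
def seg (Z : Cantor) (n : ℕ) : BStr := List.ofFn fun i : Fin n => Z i.1

/-- `lam` is the uniform (fair-coin product) measure: every cylinder `[x]`
has measure `2^{-|x|}`. -/
def IsUniform (lam : Measure Cantor) : Prop :=
  ∀ x : BStr, lam (cyl x) = (2 : ENNReal)⁻¹ ^ x.length

/-- `(G_m)` is a Martin-Löf test with respect to the measure `ρ`:
the sets `G_m` are uniformly effectively open and `ρ (G_m) ≤ 2^{-m}`. -/
def IsMLTest (ρ : Measure Cantor) (G : ℕ → Set Cantor) : Prop :=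
  (∃ σ : ℕ → ℕ → BStr, Computable₂ σ ∧ ∀ m, G m = ⋃ i, cyl (σ m i)) ∧
  ∀ m, ρ (G m) ≤ (2 : ENNReal)⁻¹ ^ m

/-- `μ` is Martin-Löf absolutely continuous in `ρ`: `inf_m μ(G_m) = 0`
for every `ρ`-Martin-Löf test `(G_m)`. -/
def MLAC (μ ρ : Measure Cantor) : Prop :=
  ∀ G : ℕ → Set Cantor, IsMLTest ρ G → ⨅ m, μ (G m) = 0

/-- `Z` is Martin-Löf random with respect to `lam`. -/
def MLRandom (lam : Measure Cantor) (Z : Cantor) : Prop :=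
  ∀ G : ℕ → Set Cantor, IsMLTest lam G → Z ∉ ⋂ m, G m

/-- `ρ` is a computable measure: `ρ [x]` is a computable real, uniformly in `x`. -/
def ComputableMeasure (ρ : Measure Cantor) : Prop :=
  ∃ q : BStr → ℕ → ℚ, Computable₂ q ∧
    ∀ x k, |(q x k : ℝ) - (ρ (cyl x)).toReal| ≤ (2 : ℝ)⁻¹ ^ k

/-- `U` is a universal plain machine. -/
def UniversalPlain (U : BStr →. BStr) : Prop :=
  Partrec U ∧ ∀ M : BStr →. BStr, Partrec M →
    ∃ c : ℕ, ∀ p x, x ∈ M p → ∃ q : BStr, q.length ≤ p.length + c ∧ x ∈ U q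

/-- The domain of `M` is an antichain under the prefix relation. -/
def PrefixFreeDom (M : BStr →. BStr) : Prop :=
  ∀ p q : BStr, (M p).Dom → (M q).Dom → p <+: q → p = q

/-- `U` is a universal prefix-free machine. -/
def UniversalPrefixFree (U : BStr →. BStr) : Prop :=
  Partrec U ∧ PrefixFreeDom U ∧
  ∀ M : BStr →. BStr, Partrec M → PrefixFreeDom M →
    ∃ c : ℕ, ∀ p x, x ∈ M p → ∃ q : BStr, q.length ≤ p.length + c ∧ x ∈ U q

/-- Kolmogorov complexity of the string `x` with respect to the machine `U`:
the minimal length of a `U`-description of `x`. -/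
noncomputable def cpx (U : BStr →. BStr) (x : BStr) : ℕ :=
  sInf {n | ∃ q : BStr, q.length = n ∧ x ∈ U q}

/-- A natural number `n` identified with the string `0^n`. -/
def numStr (n : ℕ) : BStr := List.replicate n false

/-- Complexity of the natural number `n` (i.e., of the string `0^n`). -/
noncomputable def cpxN (U : BStr →. BStr) (n : ℕ) : ℕ := cpx U (numStr n)

/-- The `μ`-average complexity of the strings of length `n`:
`Σ_{|x|=n} cpx(x) · μ[x]`. -/
noncomputable def avgCpx (U : BStr →. BStr) (μ : Measure Cantor) (n : ℕ) : ℝ :=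
  ∑ v : Fin n → Bool, (cpx U (List.ofFn v) : ℝ) * (μ (cyl (List.ofFn v))).toReal

/-- A measure `μ` is trivial for the complexity given by the machine `U`
(e.g. K-trivial when `U` is the universal prefix-free machine, C-trivial
when `U` is the universal plain machine). -/
def MeasTrivial (U : BStr →. BStr) (μ : Measure Cantor) : Prop :=
  ∃ c : ℝ, ∀ n : ℕ, avgCpx U μ n ≤ (cpxN U n : ℝ) + c

/-- A universal plain machine with an auxiliary (conditioning) input;
natural-number conditions are identified with unary strings and pairs
are encoded by the computable pairing `Nat.pair`. -/
def UniversalPlainCond (U : BStr → ℕ →. BStr) : Prop :=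
  Partrec₂ U ∧ ∀ M : BStr → ℕ →. BStr, Partrec₂ M →
    ∃ c : ℕ, ∀ p y x, x ∈ M p y → ∃ q : BStr, q.length ≤ p.length + c ∧ x ∈ U q y

/-- For every condition `y`, the domain of `M (·) y` is an antichain under
the prefix relation. -/
def PrefixFreeDomCond (M : BStr → ℕ →. BStr) : Prop :=
  ∀ (y : ℕ) (p q : BStr), (M p y).Dom → (M q y).Dom → p <+: q → p = q

/-- A universal prefix-free machine with an auxiliary (conditioning) input. -/
def UniversalPrefixFreeCond (U : BStr → ℕ →. BStr) : Prop :=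
  Partrec₂ U ∧ PrefixFreeDomCond U ∧
  ∀ M : BStr → ℕ →. BStr, Partrec₂ M → PrefixFreeDomCond M →
    ∃ c : ℕ, ∀ p y x, x ∈ M p y → ∃ q : BStr, q.length ≤ p.length + c ∧ x ∈ U q y

/-- Conditional Kolmogorov complexity of `x` given `y`, with respect to the
machine `U` with auxiliary input. -/
noncomputable def cpxCond (U : BStr → ℕ →. BStr) (x : BStr) (y : ℕ) : ℕ :=
  sInf {n | ∃ q : BStr, q.length = n ∧ x ∈ U q y}

/-- A strong Solovay test: a sequence of clopen sets `S_r`, given uniformly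
computably as finite unions of cylinders, with `Σ_r λ(S_r) < ∞`. -/
def StrongSolovayTest (lam : Measure Cantor) (S : ℕ → Set Cantor) : Prop :=
  (∃ X : ℕ → List BStr, Computable X ∧ ∀ r, S r = ⋃ x ∈ X r, cyl x) ∧
  (∑' r, lam (S r)) ≠ ⊤

/-- The `μ`-average conditional complexity `C(μ↾n ∣ n) = Σ_{|x|=n} C(x∣n)·μ[x]`. -/
noncomputable def avgCpxCond (Uc : BStr → ℕ →. BStr) (μ : Measure Cantor) (n : ℕ) : ℝ :=
  ∑ v : Fin n → Bool, (cpxCond Uc (List.ofFn v) n : ℝ) * (μ (cyl (List.ofFn v))).toReal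

/-!
Spread the test out so that each length `n` belongs to at most one `S_r`, and let `L n` be the
computable list of the strings of length `n` that generate this `S_r`. Then `∑ |L n| 2⁻ⁿ` is
`∑ λ(S_r) < ∞`. A string in `L n` is determined, given `n`, by its position in `L n`, which takes
about `log |L n|` bits, so `f n = n - log |L n|` bits are saved on the cylinders making up `S_r`.
The `μ`-average is the integral of `Z ↦ C(Z↾n ∣ n)`, and the saving occurs on a set of measure
`μ(S_r) ≥ δ`.
-/

/-! ### Cylinders -/

@[simp]
lemma length_seg (Z : Cantor) (n : ℕ) : (seg Z n).length = n := List.length_ofFn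

lemma take_seg (Z : Cantor) {k n : ℕ} (hkn : k ≤ n) : (seg Z n).take k = seg Z k :=
  List.ext_getElem (by simpa using hkn) fun i _ _ => by simp [seg]

lemma mem_cyl_iff_seg_eq {x : BStr} {Z : Cantor} : Z ∈ cyl x ↔ seg Z x.length = x := by
  simp [cyl, seg, List.ext_getElem_iff, Fin.forall_iff]

lemma mem_cyl_iff_isPrefix_seg {x : BStr} {n : ℕ} (hx : x.length ≤ n) {Z : Cantor} :
    Z ∈ cyl x ↔ x <+: seg Z n := by
  rw [mem_cyl_iff_seg_eq, List.prefix_iff_eq_take, take_seg Z hx, eq_comm]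

lemma mem_biUnion_cyl_iff {L : List BStr} {n : ℕ} (hL : ∀ x ∈ L, x.length = n) {Z : Cantor} :
    Z ∈ ⋃ x ∈ L, cyl x ↔ seg Z n ∈ L := by
  simp only [Set.mem_iUnion, exists_prop]
  constructor
  · rintro ⟨x, hx, hZ⟩
    rwa [← hL x hx, mem_cyl_iff_seg_eq.1 hZ]
  · exact fun hZ => ⟨_, hZ, mem_cyl_iff_seg_eq.2 (by rw [length_seg])⟩

lemma measurableSet_cyl (x : BStr) : MeasurableSet (cyl x) := by
  simp only [cyl, Set.ofPred_forall]
  exact .iInter fun i => measurable_pi_apply i.1 (measurableSet_singleton _)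

lemma measurableSet_biUnion_cyl (L : List BStr) : MeasurableSet (⋃ x ∈ L, cyl x) :=
  .biUnion (Set.to_countable {x | x ∈ L}) fun x _ => measurableSet_cyl x

lemma IsUniform.measure_biUnion_cyl {lam : Measure Cantor} (hlam : IsUniform lam) {L : List BStr}
    (hnodup : L.Nodup) {n : ℕ} (hL : ∀ x ∈ L, x.length = n) :
    lam (⋃ x ∈ L, cyl x) = L.length * (2 : ENNReal)⁻¹ ^ n := by
  have hdisj : (L.toFinset : Set BStr).PairwiseDisjoint cyl := by
    intro x hx y hy hxy
    refine Set.disjoint_left.2 fun Z hZx hZy => hxy ?_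
    rw [mem_cyl_iff_seg_eq, hL x (List.mem_toFinset.1 hx)] at hZx
    rw [mem_cyl_iff_seg_eq, hL y (List.mem_toFinset.1 hy)] at hZy
    exact hZx.symm.trans hZy
  calc lam (⋃ x ∈ L, cyl x) = lam (⋃ x ∈ L.toFinset, cyl x) := by simp only [List.mem_toFinset]
    _ = ∑ x ∈ L.toFinset, lam (cyl x) :=
      measure_biUnion_finset hdisj fun x _ => measurableSet_cyl x
    _ = ∑ _x ∈ L.toFinset, (2 : ENNReal)⁻¹ ^ n :=
      Finset.sum_congr rfl fun x hx => by rw [hlam, hL x (List.mem_toFinset.1 hx)]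
    _ = L.length * (2 : ENNReal)⁻¹ ^ n := by
      rw [Finset.sum_const, List.toFinset_card_of_nodup hnodup, nsmul_eq_mul]

/-! ### Average complexity as an integral -/

lemma integral_comp_seg (μ : Measure Cantor) [IsFiniteMeasure μ] (n : ℕ) (g : BStr → ℝ) :
    ∫ Z, g (seg Z n) ∂μ = ∑ v : Fin n → Bool, g (List.ofFn v) * μ.real (cyl (List.ofFn v)) := by
  have hres : Measurable fun (Z : Cantor) (i : Fin n) => Z i := by fun_prop
  have hcyl (v : Fin n → Bool) :
      (fun (Z : Cantor) (i : Fin n) => Z i) ⁻¹' {v} = cyl (List.ofFn v) := by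
    ext Z
    rw [mem_cyl_iff_seg_eq, List.length_ofFn, seg, List.ofFn_inj]
    rfl
  calc ∫ Z, g (seg Z n) ∂μ
      = ∫ v, g (List.ofFn v) ∂μ.map fun (Z : Cantor) (i : Fin n) => Z i :=
        (integral_map (f := fun v => g (List.ofFn v)) hres.aemeasurable
          (measurable_of_finite _).aestronglyMeasurable).symm
    _ = ∑ v : Fin n → Bool, g (List.ofFn v) * μ.real (cyl (List.ofFn v)) := by
        rw [integral_fintype .of_finite]
        refine Finset.sum_congr rfl fun v _ => ?_
        rw [map_measureReal_apply hres (measurableSet_singleton v), hcyl, smul_eq_mul, mul_comm]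

lemma integrable_comp_seg (μ : Measure Cantor) [IsFiniteMeasure μ] (n : ℕ) (g : BStr → ℝ) :
    Integrable (fun Z => g (seg Z n)) μ := by
  have hres : Measurable fun (Z : Cantor) (i : Fin n) => Z i := by fun_prop
  exact (Integrable.of_finite (f := fun v : Fin n → Bool => g (List.ofFn v))).comp_measurable hres

lemma avgCpxCond_eq_integral (U : BStr → ℕ →. BStr) (μ : Measure Cantor) [IsFiniteMeasure μ]
    (n : ℕ) : avgCpxCond U μ n = ∫ Z, (cpxCond U (seg Z n) n : ℝ) ∂μ :=
  (integral_comp_seg μ n fun x => cpxCond U x n).symm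

lemma avgCpxCond_le_sub {U : BStr → ℕ →. BStr} (μ : Measure Cantor) [IsFiniteMeasure μ] {n : ℕ}
    {A : Set Cantor} (hA : MeasurableSet A) {a b : ℝ} (hle : ∀ Z, cpxCond U (seg Z n) n ≤ a)
    (hleA : ∀ Z ∈ A, cpxCond U (seg Z n) n ≤ a - b) :
    avgCpxCond U μ n ≤ μ.real Set.univ * a - μ.real A * b := by
  have hindicator : Integrable (A.indicator fun _ => b) μ := (integrable_const b).indicator hA
  calc avgCpxCond U μ n = ∫ Z, (cpxCond U (seg Z n) n : ℝ) ∂μ := avgCpxCond_eq_integral U μ n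
    _ ≤ ∫ Z, a - A.indicator (fun _ => b) Z ∂μ := by
      refine integral_mono (integrable_comp_seg μ n fun x => cpxCond U x n)
        ((integrable_const a).sub hindicator) fun Z => ?_
      by_cases hZ : Z ∈ A
      · simpa [hZ] using hleA Z hZ
      · simpa [hZ] using hle Z
    _ = μ.real Set.univ * a - μ.real A * b := by
      rw [integral_sub (integrable_const a) hindicator, integral_indicator_const b hA,
        integral_const, smul_eq_mul, smul_eq_mul]

/-! ### Primitive recursive functions on numbers and strings -/

lemma primrec_nat_log (b : ℕ) : Primrec (Nat.log b) := by
  rcases le_or_gt b 1 with hb | hb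
  · exact (Primrec.const 0).of_eq fun n => (Nat.log_of_left_le_one hb n).symm
  · have hpow : PrimrecRel fun n k : ℕ => b ^ k ≤ n :=
      Primrec.nat_le.comp ((Primrec₂.unpaired'.1 Nat.Primrec.pow).comp (.const b) .snd) .fst
    refine (Primrec.nat_findGreatest .id hpow).of_eq fun n => Nat.findGreatest_eq_iff.2
      ⟨Nat.log_le_self b n, fun hlog => Nat.pow_log_le_self b ?_, fun k hk _ => ?_⟩
    · rintro rfl
      simp at hlog
    · exact (Nat.lt_pow_of_log_lt hb hk).not_ge

lemma primrecRel_isPrefix : PrimrecRel fun x y : BStr => x <+: y :=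
  (Primrec.eq.comp Primrec.fst
    (Primrec.list_take.comp (Primrec.list_length.comp Primrec.fst) Primrec.snd)).of_eq
    fun _ => List.prefix_iff_eq_take.symm

/-- The binary strings of length `n` in lexicographic order. The place of a string in this list is
the number for which it is the binary expansion, leading zeros included. -/
def stringsOfLength : ℕ → List BStr
  | 0 => [[]]
  | n + 1 => (stringsOfLength n).map (List.cons false) ++ (stringsOfLength n).map (List.cons true)

@[simp]
lemma mem_stringsOfLength {n : ℕ} {x : BStr} : x ∈ stringsOfLength n ↔ x.length = n := by
  induction n generalizing x with
  | zero => simp [stringsOfLength]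
  | succ n ih => rcases x with _ | ⟨_ | _, x⟩ <;> simp [stringsOfLength, ih]

lemma nodup_stringsOfLength (n : ℕ) : (stringsOfLength n).Nodup := by
  induction n with
  | zero => simp [stringsOfLength]
  | succ n ih =>
    refine (ih.map List.cons_injective).append (ih.map List.cons_injective) ?_
    simp [List.disjoint_left]

@[simp]
lemma length_stringsOfLength (n : ℕ) : (stringsOfLength n).length = 2 ^ n := by
  induction n with
  | zero => rfl
  | succ n ih => simp [stringsOfLength, ih, pow_succ, mul_two]

lemma primrec_stringsOfLength : Primrec stringsOfLength := by
  have hcons (b : Bool) : Primrec fun p : ℕ × List BStr => p.2.map (List.cons b) :=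
    Primrec.list_map Primrec.snd (Primrec.list_cons.comp₂ (Primrec₂.const b) Primrec₂.right)
  have hstep : Primrec₂ fun (_ : ℕ) (l : List BStr) =>
      l.map (List.cons false) ++ l.map (List.cons true) :=
    Primrec.list_append.comp (hcons false) (hcons true)
  refine (Primrec.nat_rec₁ [[]] hstep).of_eq fun n => ?_
  induction n with
  | zero => rfl
  | succ n ih => simp only [ih, stringsOfLength]

lemma length_le_two_pow_of_nodup {L : List BStr} (hnodup : L.Nodup) {n : ℕ}
    (hL : ∀ x ∈ L, x.length = n) : L.length ≤ 2 ^ n :=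
  length_stringsOfLength n ▸
    hnodup.length_le_of_subset fun x hx => mem_stringsOfLength.2 (hL x hx)

/-! ### Complexity of the members of a computable list -/

lemma UniversalPlainCond.exists_cpxCond_le {U : BStr → ℕ →. BStr} (hU : UniversalPlainCond U)
    {M : BStr → ℕ →. BStr} (hM : Partrec₂ M) :
    ∃ c : ℕ, ∀ p y x, x ∈ M p y → cpxCond U x y ≤ p.length + c := by
  obtain ⟨c, hc⟩ := hU.2 M hM
  refine ⟨c, fun p y x hx => ?_⟩
  obtain ⟨q, hq, hqx⟩ := hc p y x hx
  have hle : cpxCond U x y ≤ q.length := Nat.sInf_le ⟨q, rfl, hqx⟩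
  exact hle.trans hq

/-- Given `n`, a member of `L n` is described by its position in `L n`, written in binary. -/
lemma UniversalPlainCond.exists_cpxCond_le_log_length {U : BStr → ℕ →. BStr}
    (hU : UniversalPlainCond U) {L : ℕ → List BStr} (hL : Computable L) :
    ∃ c : ℕ, ∀ n, ∀ x ∈ L n, cpxCond U x n ≤ Nat.log 2 (L n).length + c := by
  let M : BStr → ℕ →. BStr := fun p n => ↑(L n)[(stringsOfLength p.length).idxOf p]?
  have hM : Partrec₂ M := by
    have hindex : Primrec fun p : BStr => (stringsOfLength p.length).idxOf p :=
      (Primrec.list_idxOf.comp .id (primrec_stringsOfLength.comp .list_length)).of_eq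
        fun p => by congr!
    exact Computable.ofOption <| Computable.list_getElem?.comp (hL.comp Computable.snd)
      (hindex.to_comp.comp Computable.fst)
  obtain ⟨c, hc⟩ := hU.exists_cpxCond_le hM
  refine ⟨c + 1, fun n x hx => ?_⟩
  obtain ⟨i, hi, rfl⟩ := List.getElem_of_mem hx
  set k := Nat.log 2 (L n).length + 1
  have hik : i < (stringsOfLength k).length := by
    rw [length_stringsOfLength]
    exact hi.trans (Nat.lt_pow_succ_log_self one_lt_two _)
  have hlength : ((stringsOfLength k)[i]).length = k :=
    mem_stringsOfLength.1 (List.getElem_mem hik)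
  have hdescribes : (L n)[i] ∈ M (stringsOfLength k)[i] n := by
    simp [M, hlength, (nodup_stringsOfLength k).idxOf_getElem, hi]
  have hle := hc _ n _ hdescribes
  omega

lemma UniversalPlainCond.exists_cpxCond_le_length {U : BStr → ℕ →. BStr}
    (hU : UniversalPlainCond U) : ∃ c : ℕ, ∀ x : BStr, cpxCond U x x.length ≤ x.length + c := by
  obtain ⟨c, hc⟩ := hU.exists_cpxCond_le_log_length primrec_stringsOfLength.to_comp
  exact ⟨c, fun x => by simpa using hc x.length x (mem_stringsOfLength.2 rfl)⟩

/-! ### Spreading a strong Solovay test over distinct lengths -/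

/-- The strings of length `n` extending some member of `X`; their cylinders make up the clopen set
generated by `X` once `n` is large enough. -/
def extensions (X : List BStr) (n : ℕ) : List BStr :=
  (stringsOfLength n).filter fun y => ∃ x ∈ X, x <+: y

lemma mem_extensions {X : List BStr} {n : ℕ} {y : BStr} :
    y ∈ extensions X n ↔ y.length = n ∧ ∃ x ∈ X, x <+: y := by
  simp [extensions]

lemma primrec₂_extensions : Primrec₂ extensions :=
  primrecRel_isPrefix.exists_mem_list.swap.listFilter.comp₂
    (primrec_stringsOfLength.comp₂ Primrec₂.right) Primrec₂.left

lemma biUnion_cyl_extensions {X : List BStr} {n : ℕ} (hX : ∀ x ∈ X, x.length ≤ n) :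
    ⋃ y ∈ extensions X n, cyl y = ⋃ x ∈ X, cyl x := by
  ext Z
  rw [mem_biUnion_cyl_iff fun y hy => (mem_extensions.1 hy).1]
  simp only [mem_extensions, length_seg, true_and, Set.mem_iUnion, exists_prop]
  exact exists_congr fun x => and_congr_right fun hx => (mem_cyl_iff_isPrefix_seg (hX x hx)).symm

/-- The length assigned to the `r`-th set of the sequence generated by `X`. It is at least `r` and
at least the length of each string in `X r`, and pairing with `r` keeps the lengths distinct. -/
def level (X : ℕ → List BStr) (r : ℕ) : ℕ := Nat.pair r (X r).flatten.length

/-- The strings of length `n` generating the set that `level X` places at `n`, if there is one. -/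
def levelStrings (X : ℕ → List BStr) (n : ℕ) : List BStr :=
  if level X n.unpair.1 = n then extensions (X n.unpair.1) n else []

section Level

variable {X : ℕ → List BStr}

lemma level_injective : Function.Injective (level X) := fun _ _ h => (Nat.pair_eq_pair.1 h).1

lemma length_le_level {r : ℕ} {x : BStr} (hx : x ∈ X r) : x.length ≤ level X r :=
  (List.sublist_flatten_of_mem hx).length_le.trans (Nat.right_le_pair _ _)

lemma levelStrings_level (r : ℕ) : levelStrings X (level X r) = extensions (X r) (level X r) := by
  have hunpair : (level X r).unpair.1 = r := by simp [level]
  rw [levelStrings, hunpair, if_pos rfl]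

lemma levelStrings_eq_nil {n : ℕ} (hn : n ∉ Set.range (level X)) : levelStrings X n = [] :=
  if_neg fun h => hn ⟨_, h⟩

lemma length_of_mem_levelStrings {n : ℕ} {x : BStr} (hx : x ∈ levelStrings X n) :
    x.length = n := by
  by_cases hn : n ∈ Set.range (level X)
  · obtain ⟨r, rfl⟩ := hn
    rw [levelStrings_level] at hx
    exact (mem_extensions.1 hx).1
  · simp [levelStrings_eq_nil hn] at hx

lemma nodup_levelStrings (n : ℕ) : (levelStrings X n).Nodup := by
  rw [levelStrings]
  split_ifs
  · exact (nodup_stringsOfLength n).filter _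
  · exact List.nodup_nil

lemma computable_levelStrings (hX : Computable X) : Computable (levelStrings X) := by
  have hfst : Computable fun n : ℕ => n.unpair.1 := (Primrec.fst.comp Primrec.unpair).to_comp
  have hlevel : Computable (level X) := Primrec₂.natPair.to_comp.comp Computable.id
    ((Primrec.list_length.comp Primrec.list_flatten).to_comp.comp hX)
  refine (Computable.cond (Primrec.eq.decide.to_comp.comp (hlevel.comp hfst) .id)
    (primrec₂_extensions.to_comp.comp (hX.comp hfst) .id) (.const [])).of_eq fun n => ?_
  rw [Bool.cond_decide, levelStrings, id]

lemma biUnion_cyl_levelStrings_level (r : ℕ) :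
    ⋃ x ∈ levelStrings X (level X r), cyl x = ⋃ x ∈ X r, cyl x := by
  rw [levelStrings_level, biUnion_cyl_extensions fun _ => length_le_level]

lemma tsum_measure_levelStrings (ν : Measure Cantor) :
    ∑' n, ν (⋃ x ∈ levelStrings X n, cyl x) = ∑' r, ν (⋃ x ∈ X r, cyl x) := by
  have hsupport :
      Function.support (fun n => ν (⋃ x ∈ levelStrings X n, cyl x)) ⊆ Set.range (level X) :=
    Function.support_subset_iff'.2 fun n hn => by simp [levelStrings_eq_nil hn]
  simp only [← level_injective.tsum_eq hsupport, biUnion_cyl_levelStrings_level]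

end Level

lemma StrongSolovayTest.exists_levelwise {lam : Measure Cantor} (hlam : IsUniform lam)
    {S : ℕ → Set Cantor} (hS : StrongSolovayTest lam S) :
    ∃ L : ℕ → List BStr, Computable L ∧ (∀ n, ∀ x ∈ L n, x.length = n) ∧
      (∀ n, (L n).length ≤ 2 ^ n) ∧ Summable (fun n => (L n).length * (2⁻¹ : ℝ) ^ n) ∧
      ∀ r, ∃ n ≥ r, S r = ⋃ x ∈ L n, cyl x := by
  obtain ⟨⟨X, hX, hSX⟩, hsum⟩ := hS
  refine ⟨levelStrings X, computable_levelStrings hX, fun _ _ => length_of_mem_levelStrings,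
    fun n => length_le_two_pow_of_nodup (nodup_levelStrings n) fun _ => length_of_mem_levelStrings,
    ?_, fun r => ⟨level X r, Nat.left_le_pair _ _, ?_⟩⟩
  · have htsum : ∑' n, (levelStrings X n).length * (2 : ENNReal)⁻¹ ^ n = ∑' r, lam (S r) := by
      simp_rw [hSX, ← hlam.measure_biUnion_cyl (nodup_levelStrings _)
        fun _ => length_of_mem_levelStrings, tsum_measure_levelStrings]
    rw [← htsum] at hsum
    simpa using ENNReal.summable_toReal hsum
  · rw [hSX, biUnion_cyl_levelStrings_level]

/-! ### Complexity dips -/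

lemma inv_two_pow_sub_log_le {n N : ℕ} (hN : N ≤ 2 ^ n) :
    ((2 : ℝ) ^ (n - Nat.log 2 N))⁻¹ ≤ N * (2⁻¹ : ℝ) ^ n + (2⁻¹ : ℝ) ^ n := by
  have hlog : Nat.log 2 N ≤ n := by simpa using Nat.log_mono_right (b := 2) hN
  have hpow : (2 : ℝ) ^ Nat.log 2 N ≤ N + 1 := mod_cast Nat.pow_log_le_add_one 2 N
  calc ((2 : ℝ) ^ (n - Nat.log 2 N))⁻¹ = 2 ^ Nat.log 2 N * (2⁻¹ : ℝ) ^ n := by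
        rw [pow_sub₀ _ two_ne_zero hlog, mul_inv, inv_inv, inv_pow, mul_comm]
    _ ≤ (N + 1) * (2⁻¹ : ℝ) ^ n := by gcongr
    _ = N * (2⁻¹ : ℝ) ^ n + (2⁻¹ : ℝ) ^ n := by ring

lemma UniversalPlainCond.exists_avgCpxCond_le {U : BStr → ℕ →. BStr} (hU : UniversalPlainCond U)
    {L : ℕ → List BStr} (hL : Computable L) (hlength : ∀ n, ∀ x ∈ L n, x.length = n) :
    ∃ c : ℝ, ∀ (μ : Measure Cantor) [IsProbabilityMeasure μ] (n : ℕ),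
      avgCpxCond U μ n ≤
        n - μ.real (⋃ x ∈ L n, cyl x) * (n - Nat.log 2 (L n).length : ℕ) + c := by
  obtain ⟨c, hc⟩ := hU.exists_cpxCond_le_log_length hL
  obtain ⟨d, hd⟩ := hU.exists_cpxCond_le_length
  refine ⟨c + d, fun μ _ n => ?_⟩
  have hle (Z : Cantor) : cpxCond U (seg Z n) n ≤ n + d := by simpa using hd (seg Z n)
  have hle_sub (Z : Cantor) (hZ : Z ∈ ⋃ x ∈ L n, cyl x) :
      cpxCond U (seg Z n) n + (n - Nat.log 2 (L n).length) ≤ n + (c + d) := by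
    have hle_log := hc n _ ((mem_biUnion_cyl_iff (hlength n)).1 hZ)
    have hle_length := hle Z
    omega
  have havg := avgCpxCond_le_sub (U := U) μ (measurableSet_biUnion_cyl (L n))
    (a := n + (c + d)) (b := (n - Nat.log 2 (L n).length : ℕ))
    (fun Z => by exact_mod_cast (hle Z).trans (by omega))
    fun Z hZ => le_sub_iff_add_le.2 (by exact_mod_cast hle_sub Z hZ)
  rw [probReal_univ] at havg
  linarith

theorem failing_strong_solovay_test_gives_complexity_dips_general
    (Uc : BStr → ℕ →. BStr) (hUc : UniversalPlainCond Uc)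
    (lam : Measure Cantor) (hlam : IsUniform lam)
    (S : ℕ → Set Cantor) (hS : StrongSolovayTest lam S) :
    ∃ f : ℕ → ℕ, Computable f ∧ Summable (fun n => ((2 : ℝ) ^ f n)⁻¹) ∧
      ∃ c : ℝ, ∀ (μ : Measure Cantor) [IsProbabilityMeasure μ] (δ : ℝ),
        (∃ᶠ r in atTop, δ ≤ μ.real (S r)) →
          ∃ᶠ n in atTop, avgCpxCond Uc μ n ≤ (n : ℝ) - δ * (f n : ℝ) + c := by
  obtain ⟨L, hL, hlength, hcard, hsum, hSL⟩ := hS.exists_levelwise hlam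
  obtain ⟨c, hc⟩ := hUc.exists_avgCpxCond_le hL hlength
  refine ⟨fun n => n - Nat.log 2 (L n).length, ?_, ?_, c, fun μ _ δ hδ => ?_⟩
  · exact Primrec.nat_sub.to_comp.comp .id
      ((primrec_nat_log 2).to_comp.comp (Computable.list_length.comp hL))
  · exact .of_nonneg_of_le (fun n => by positivity) (fun n => inv_two_pow_sub_log_le (hcard n))
      (hsum.add (summable_geometric_of_lt_one (by norm_num) (by norm_num)))
  · refine frequently_atTop.2 fun m => ?_
    obtain ⟨r, hmr, hδr⟩ := frequently_atTop.1 hδ m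
    obtain ⟨n, hrn, hSn⟩ := hSL r
    refine ⟨n, hmr.trans hrn, (hc μ n).trans ?_⟩
    gcongr
    exact hSn ▸ hδr

/-- if `μ` fails a strong Solovay test `(S_r)` at a rational
level `δ > 0` (i.e. `μ(S_r) ≥ δ` for infinitely many `r`), then there are a
computable `f` with `Σ_n 2^{-f(n)} < ∞` and a constant `c` such that
`C(μ↾n ∣ n) ≤ n - δ·f(n) + c` for infinitely many `n`. -/
theorem failing_strong_solovay_test_gives_complexity_dips
    (Uc : BStr → ℕ →. BStr) (hUc : UniversalPlainCond Uc)
    (lam : Measure Cantor) (hlam : IsUniform lam)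
    (S : ℕ → Set Cantor) (hS : StrongSolovayTest lam S)
    (μ : Measure Cantor) [IsProbabilityMeasure μ]
    (δ : ℚ) (hδ : 0 < δ)
    (hfail : ∀ m : ℕ, ∃ r ≥ m, ENNReal.ofReal (δ : ℝ) ≤ μ (S r)) :
    ∃ f : ℕ → ℕ, Computable f ∧ Summable (fun n => ((2 : ℝ) ^ f n)⁻¹) ∧
      ∃ c : ℝ, ∀ m : ℕ, ∃ n ≥ m,
        avgCpxCond Uc μ n ≤ (n : ℝ) - (δ : ℝ) * (f n : ℝ) + c := by
  obtain ⟨f, hf, hsum, c, hdips⟩ :=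
    failing_strong_solovay_test_gives_complexity_dips_general Uc hUc lam hlam S hS
  exact ⟨f, hf, hsum, c, frequently_atTop.1 <| hdips μ δ <| (frequently_atTop.2 hfail).mono
    fun _ => (ENNReal.ofReal_le_iff_le_toReal (measure_ne_top _ _)).1⟩
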